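/- Assume 2r < σ² and K < 2L. Then the perpetual value function is given explicitly by V(x) = G(x) for x ∈ (0, K/2] and V(x) = (L^α · K² / 4) · x^{−2r/σ²} for x ∈ (K/2, ∞); moreover the stopping time τ_{K/2} = inf{t ≥ 0 : X^x_t ≤ K/2} is optimal, i.e. V(x) = E[e^{−r·τ_{K/2}} G(X^x_{τ_{K/2}})] for every x > 0. -/

import Mathlib

open MeasureTheory ProbabilityTheory Real Set Filter

noncomputable section

/-- Geometric Brownian motion with parameters `r`, `σ`, started at `x`,
driven by the process `W`: `X^x_t = x · exp((r - σ²/2)t + σ W_t)`. -/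
def GBM {Ω : Type} (r σ x : ℝ) (W : ℝ → Ω → ℝ) (t : ℝ) (ω : Ω) : ℝ :=
  x * Real.exp ((r - σ ^ 2 / 2) * t + σ * W t ω)

/-- `W` is a standard Brownian motion with respect to the filtration `F` under the
probability measure `P`: it starts at `0`, has continuous paths, is adapted to `F`,
has Gaussian increments `W t - W s ∼ N(0, t - s)`, and its increments after time `s`
are independent of `F s`. -/
structure IsStdBM {Ω : Type} [mΩ : MeasurableSpace Ω] (P : Measure Ω)
    (F : Filtration ℝ mΩ) (W : ℝ → Ω → ℝ) : Prop where
  init : ∀ ω, W 0 ω = 0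
  cont : ∀ ω, Continuous fun t => W t ω
  adapted : ∀ t : ℝ, Measurable[F t] (W t)
  incr_law : ∀ s t : ℝ, 0 ≤ s → s ≤ t →
      Measure.map (fun ω => W t ω - W s ω) P = gaussianReal 0 (Real.toNNReal (t - s))
  incr_indep : ∀ s t : ℝ, 0 ≤ s → s ≤ t →
      Indep (MeasurableSpace.comap (fun ω => W t ω - W s ω) Real.measurableSpace) (F s) P

/-- An `ℝ≥0∞`-valued random time `τ` is a stopping time for the real-indexed
filtration `F` if `{τ ≤ t} ∈ F t` for every `t ≥ 0`. -/
def IsStoppingTimeE {Ω : Type} [mΩ : MeasurableSpace Ω] (F : Filtration ℝ mΩ)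
    (τ : Ω → ENNReal) : Prop :=
  ∀ t : ℝ, 0 ≤ t → MeasurableSet[F t] {ω | τ ω ≤ ENNReal.ofReal t}

/-- The perpetual Azéma supermartingale function `Z(x) = min{(L/x)^α, 1}`,
with `α = 2r/σ² - 1`. -/
def Zp (r σ L x : ℝ) : ℝ := min ((L / x) ^ (2 * r / σ ^ 2 - 1)) 1

/-- The perpetual gain function `G(x) = (K - x)⁺ · Z(x)`. -/
def gainP (r σ L K x : ℝ) : ℝ := max (K - x) 0 * Zp r σ L x

/-- The perpetual value function `V(x) = sup_τ E[e^{-rτ} G(X^x_τ)]`, the supremum over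
all stopping times, with the convention that the payoff vanishes on `{τ = ∞}`. -/
def valueP {Ω : Type} [mΩ : MeasurableSpace Ω] (P : Measure Ω) (F : Filtration ℝ mΩ)
    (W : ℝ → Ω → ℝ) (r σ L K x : ℝ) : ℝ :=
  ⨆ τ : {τ : Ω → ENNReal // IsStoppingTimeE F τ},
    ∫ ω in {ω | τ.1 ω ≠ ⊤},
      Real.exp (-r * (τ.1 ω).toReal) * gainP r σ L K (GBM r σ x W ((τ.1 ω).toReal) ω) ∂P

/-- The first passage time `τ_b = inf{t ≥ 0 : X^x_t ≤ b}` of the geometric Brownian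
motion `X^x` at or below the level `b`. -/
def hitTime {Ω : Type} (r σ x b : ℝ) (W : ℝ → Ω → ℝ) (ω : Ω) : ℝ :=
  sInf {t : ℝ | 0 ≤ t ∧ GBM r σ x W t ω ≤ b}

/-
Put `γ = 2r/σ²`, so that `α = γ - 1`. The discounted processes `e^{-rt} X_t` and
`e^{-rt} X_t ^ (-γ)` are nonnegative martingales, hence optional stopping bounds the payoff of any
stopping time by `A x + B x ^ (-γ)` as soon as `A, B ≥ 0` and `G y ≤ A y + B y ^ (-γ)` for all
`y > 0`. Since `G y ≤ L ^ α (K - y) y · y ^ (-γ)`, with equality for `y ≤ min L K`, the best choice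
is tangent to the right-hand side at `c = min x (K/2)`: for `c = K/2` it has `A = 0`, because `K/2`
maximises `(K - y) y`, and for `c < K/2` it has `A > 0`. The Laplace transform of the first passage
below `K/2`, obtained from the second martingale, shows that stopping there attains the bound.
-/

open scoped NNReal ENNReal Topology

section OptionalStopping

variable {Ω : Type*} {m : MeasurableSpace Ω}

/-- The least multiple of `1 / (n + 1)` that is at least `t`. Applied to a stopping time it gives
a stopping time with countable range, approximating the original one from above. -/
def ceilGrid (n : ℕ) (t : ℝ≥0) : ℝ≥0 := ⌈t * (n + 1)⌉₊ / (n + 1)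

lemma le_ceilGrid (n : ℕ) (t : ℝ≥0) : t ≤ ceilGrid n t := by
  rw [ceilGrid, le_div_iff₀ (by positivity)]
  exact Nat.le_ceil _

lemma ceilGrid_le_add (n : ℕ) (t : ℝ≥0) : ceilGrid n t ≤ t + 1 / (n + 1) := by
  rw [ceilGrid, div_le_iff₀ (by positivity), add_mul, one_div_mul_cancel (by positivity)]
  exact (Nat.ceil_lt_add_one zero_le).le

lemma ceilGrid_le_iff (n : ℕ) (s t : ℝ≥0) :
    ceilGrid n s ≤ t ↔ s ≤ (⌊t * (n + 1)⌋₊ / (n + 1) : ℝ≥0) := by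
  rw [ceilGrid, div_le_iff₀ (by positivity), le_div_iff₀ (by positivity), ← Nat.ceil_le,
    ← Nat.le_floor_iff zero_le]

lemma countable_range_ceilGrid (n : ℕ) : (range (ceilGrid n)).Countable :=
  (countable_range fun k : ℕ => (k / (n + 1) : ℝ≥0)).mono <| by
    rintro _ ⟨t, rfl⟩
    exact ⟨⌈t * (n + 1)⌉₊, rfl⟩

lemma tendsto_ceilGrid (t : ℝ≥0) : Tendsto (fun n => ceilGrid n t) atTop (𝓝[≥] t) := by
  refine tendsto_nhdsWithin_iff.2 ⟨?_, Eventually.of_forall fun n => le_ceilGrid n t⟩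
  have h : Tendsto (fun n : ℕ => t + 1 / ((n : ℝ≥0) + 1)) atTop (𝓝 (t + 0)) :=
    tendsto_const_nhds.add tendsto_one_div_add_atTop_nhds_zero_nat
  rw [add_zero] at h
  exact tendsto_of_tendsto_of_tendsto_of_le_of_le tendsto_const_nhds h
    (fun n => le_ceilGrid n t) (fun n => ceilGrid_le_add n t)

lemma isStoppingTime_ceilGrid {𝓕 : Filtration ℝ≥0 m} {τ : Ω → WithTop ℝ≥0}
    (hτ : IsStoppingTime 𝓕 τ) (hτ_top : ∀ ω, τ ω ≠ ⊤) (n : ℕ) :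
    IsStoppingTime 𝓕 fun ω => (ceilGrid n (τ ω).untopA : WithTop ℝ≥0) := by
  intro t
  simp only [WithTop.coe_le_coe, ceilGrid_le_iff, WithTop.untopA_le_iff (hτ_top _)]
  refine 𝓕.mono ?_ _ (hτ _)
  rw [div_le_iff₀ (by positivity)]
  exact Nat.floor_le zero_le

variable {μ : Measure Ω} [IsFiniteMeasure μ] {𝓕 : Filtration ℝ≥0 m} {f : ℝ≥0 → Ω → ℝ}
  {τ : Ω → WithTop ℝ≥0} {T : ℝ≥0}

lemma stoppedValue_ceilGrid_ae_eq_condExp (hf : Martingale f 𝓕 μ) (hτ : IsStoppingTime 𝓕 τ)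
    (hτ_le : ∀ ω, τ ω ≤ T) (n : ℕ) :
    ∃ 𝓖 ≤ m, (fun ω => f (ceilGrid n (τ ω).untopA) ω) =ᵐ[μ] μ[f (T + 1)|𝓖] := by
  have hτ_top (ω : Ω) : τ ω ≠ ⊤ := ne_top_of_le_ne_top WithTop.coe_ne_top (hτ_le ω)
  have hgrid := isStoppingTime_ceilGrid hτ hτ_top n
  have hgrid_le (ω : Ω) : (ceilGrid n (τ ω).untopA : WithTop ℝ≥0) ≤ (T + 1 : ℝ≥0) := by
    refine WithTop.coe_le_coe.2 ((ceilGrid_le_add n _).trans (add_le_add ?_ ?_))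
    · exact (WithTop.untopA_le_iff (hτ_top ω)).2 (hτ_le ω)
    · exact div_le_one_of_le₀ (le_add_of_nonneg_left zero_le) zero_le
  have hcount : (range fun ω => (ceilGrid n (τ ω).untopA : WithTop ℝ≥0)).Countable := by
    refine ((countable_range_ceilGrid n).image ((↑) : ℝ≥0 → WithTop ℝ≥0)).mono ?_
    rintro _ ⟨ω, rfl⟩
    exact mem_image_of_mem _ (mem_range_self _)
  exact ⟨hgrid.measurableSpace, hgrid.measurableSpace_le,
    hf.stoppedValue_ae_eq_condExp_of_le_const_of_countable_range hgrid hgrid_le hcount⟩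

theorem integrable_stoppedValue_and_integral_eq (hf : Martingale f 𝓕 μ)
    (hf_cont : ∀ ω t, ContinuousWithinAt (fun s => f s ω) (Ici t) t)
    (hτ : IsStoppingTime 𝓕 τ) (hτ_le : ∀ ω, τ ω ≤ T) :
    Integrable (stoppedValue f τ) μ ∧ ∫ ω, stoppedValue f τ ω ∂μ = ∫ ω, f 0 ω ∂μ := by
  choose 𝓖 h𝓖 hcond using stoppedValue_ceilGrid_ae_eq_condExp hf hτ hτ_le
  have hUI : UniformIntegrable (fun n ω => f (ceilGrid n (τ ω).untopA) ω) 1 μ :=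
    ((hf.integrable (T + 1)).uniformIntegrable_condExp h𝓖).ae_eq fun n => (hcond n).symm
  have hlim : ∀ᵐ ω ∂μ,
      Tendsto (fun n => f (ceilGrid n (τ ω).untopA) ω) atTop (𝓝 (stoppedValue f τ ω)) :=
    ae_of_all _ fun ω => (hf_cont ω _).tendsto.comp (tendsto_ceilGrid _)
  have hint : Integrable (stoppedValue f τ) μ := hUI.integrable_of_ae_tendsto hlim
  refine ⟨hint, tendsto_nhds_unique (tendsto_integral_of_L1' _ hint.1 (.of_forall fun n =>
    memLp_one_iff_integrable.1 (hUI.memLp n)) (tendsto_Lp_finite_of_tendsto_ae le_rfl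
    ENNReal.one_ne_top hUI.1 (memLp_one_iff_integrable.2 hint) hUI.2.1 hlim)) ?_⟩
  have hmean (n : ℕ) : ∫ ω, f (ceilGrid n (τ ω).untopA) ω ∂μ = ∫ ω, f 0 ω ∂μ := by
    rw [integral_congr_ae (hcond n), integral_condExp (h𝓖 n)]
    simpa using (hf.setIntegral_eq (zero_le : 0 ≤ T + 1) MeasurableSet.univ).symm
  simp only [hmean]
  exact tendsto_const_nhds

lemma integrable_and_integral_le_of_tendsto {ν : Measure Ω} {F : ℕ → Ω → ℝ} {G : Ω → ℝ} {C : ℝ}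
    (hF : ∀ n, Integrable (F n) ν) (hF_nonneg : ∀ n, 0 ≤ᵐ[ν] F n) (hFC : ∀ n, ∫ ω, F n ω ∂ν ≤ C)
    (hlim : ∀ᵐ ω ∂ν, Tendsto (fun n => F n ω) atTop (𝓝 (G ω))) :
    Integrable G ν ∧ ∫ ω, G ω ∂ν ≤ C := by
  have hG_nonneg : 0 ≤ᵐ[ν] G := by
    filter_upwards [hlim, ae_all_iff.2 hF_nonneg] with ω hω h0
    exact ge_of_tendsto' hω h0
  have hG : AEStronglyMeasurable G ν :=
    aestronglyMeasurable_of_tendsto_ae atTop (fun n => (hF n).1) hlim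
  have hF_lint (n : ℕ) : ∫⁻ ω, ‖F n ω‖ₑ ∂ν ≤ ENNReal.ofReal C := by
    rw [← ofReal_integral_norm_eq_lintegral_enorm (hF n)]
    refine ENNReal.ofReal_le_ofReal ((integral_congr_ae ?_).trans_le (hFC n))
    filter_upwards [hF_nonneg n] with ω hω using Real.norm_of_nonneg hω
  have hG_lint : ∫⁻ ω, ‖G ω‖ₑ ∂ν ≤ ENNReal.ofReal C :=
    calc ∫⁻ ω, ‖G ω‖ₑ ∂ν
      _ = ∫⁻ ω, liminf (fun n => ‖F n ω‖ₑ) atTop ∂ν :=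
        lintegral_congr_ae (hlim.mono fun ω hω => hω.enorm.liminf_eq.symm)
      _ ≤ liminf (fun n => ∫⁻ ω, ‖F n ω‖ₑ ∂ν) atTop :=
        lintegral_liminf_le' fun n => (hF n).1.enorm
      _ ≤ ENNReal.ofReal C := liminf_le_of_frequently_le' (.of_forall hF_lint)
  refine ⟨⟨hG, hG_lint.trans_lt ENNReal.ofReal_lt_top⟩, ?_⟩
  have hC : 0 ≤ C := (integral_nonneg_of_ae (hF_nonneg 0)).trans (hFC 0)
  calc ∫ ω, G ω ∂ν
    _ = ∫ ω, ‖G ω‖ ∂ν :=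
      integral_congr_ae (hG_nonneg.mono fun ω hω => (Real.norm_of_nonneg hω).symm)
    _ = (∫⁻ ω, ‖G ω‖ₑ ∂ν).toReal := integral_norm_eq_lintegral_enorm hG
    _ ≤ C := ENNReal.toReal_le_of_le_ofReal hC hG_lint

lemma tendsto_stoppedProcess {f : ℝ≥0 → Ω → ℝ} {τ : Ω → WithTop ℝ≥0} {ω : Ω} (h : τ ω ≠ ⊤) :
    Tendsto (fun n : ℕ => stoppedProcess f τ n ω) atTop (𝓝 (stoppedValue f τ ω)) := by
  obtain ⟨t, ht⟩ := WithTop.ne_top_iff_exists.1 h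
  refine tendsto_const_nhds.congr' ?_
  filter_upwards [eventually_ge_atTop ⌈t⌉₊] with n hn
  have htn : (t : WithTop ℝ≥0) ≤ (n : ℝ≥0) := WithTop.coe_le_coe.2 (Nat.ceil_le.1 hn)
  rw [stoppedProcess, stoppedValue, ← ht, min_eq_right htn]

theorem integrable_and_integral_stoppedProcess (hf : Martingale f 𝓕 μ)
    (hf_cont : ∀ ω t, ContinuousWithinAt (fun s => f s ω) (Ici t) t)
    (hτ : IsStoppingTime 𝓕 τ) (t : ℝ≥0) :
    Integrable (stoppedProcess f τ t) μ ∧ ∫ ω, stoppedProcess f τ t ω ∂μ = ∫ ω, f 0 ω ∂μ :=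
  integrable_stoppedValue_and_integral_eq (T := t) hf hf_cont
    (by simpa only [min_comm] using hτ.min_const t) fun _ => min_le_left _ _

theorem integrableOn_stoppedValue_and_setIntegral_le (hf : Martingale f 𝓕 μ)
    (hf_cont : ∀ ω t, ContinuousWithinAt (fun s => f s ω) (Ici t) t) (hf_nonneg : 0 ≤ f)
    (hτ : IsStoppingTime 𝓕 τ) :
    IntegrableOn (stoppedValue f τ) {ω | τ ω ≠ ⊤} μ ∧
      ∫ ω in {ω | τ ω ≠ ⊤}, stoppedValue f τ ω ∂μ ≤ ∫ ω, f 0 ω ∂μ := by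
  have hmean := integrable_and_integral_stoppedProcess hf hf_cont hτ
  have h_nonneg (t : ℝ≥0) : 0 ≤ stoppedProcess f τ t := fun ω => hf_nonneg _ ω
  refine integrable_and_integral_le_of_tendsto (F := fun n : ℕ => stoppedProcess f τ n)
    (fun n => (hmean n).1.integrableOn) (fun n => .of_forall (h_nonneg n)) (fun n => ?_) ?_
  · rw [← (hmean n).2]
    exact setIntegral_le_integral (hmean n).1 (.of_forall (h_nonneg n))
  · filter_upwards [ae_restrict_mem hτ.measurableSet_eq_top.compl] with ω hω
    exact tendsto_stoppedProcess hω

end OptionalStopping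

section HittingTime

lemma hittingAfter_le_coe_iff_of_isClosed {Ω E ι : Type*} [ConditionallyCompleteLinearOrder ι]
    [TopologicalSpace ι] [OrderTopology ι] [TopologicalSpace E] {u : ι → Ω → E} {C : Set E}
    {n t : ι} {ω : Ω} (hu : Continuous fun s => u s ω) (hC : IsClosed C) :
    hittingAfter u C n ω ≤ t ↔ ∃ s ∈ Icc n t, u s ω ∈ C := by
  refine ⟨fun h => ?_, fun ⟨s, hs, hsC⟩ =>
    (hittingAfter_le_of_mem hs.1 hsC).trans (WithTop.coe_le_coe.2 hs.2)⟩
  have hne : ∃ s, n ≤ s ∧ u s ω ∈ C := by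
    contrapose! h
    rw [hittingAfter_eq_top_iff.2 h]
    exact WithTop.coe_lt_top t
  have hmem : sInf {s | n ≤ s ∧ u s ω ∈ C} ∈ {s | n ≤ s ∧ u s ω ∈ C} :=
    (isClosed_Ici.inter (hC.preimage hu)).csInf_mem hne ⟨n, fun s hs => hs.1⟩
  rw [hittingAfter, if_pos hne, WithTop.coe_le_coe] at h
  exact ⟨_, ⟨hmem.1, h⟩, hmem.2⟩

theorem isStoppingTime_hittingAfter_of_isClosed {Ω E : Type*} {m : MeasurableSpace Ω}
    [PseudoEMetricSpace E] [MeasurableSpace E] [OpensMeasurableSpace E] {𝓕 : Filtration ℝ≥0 m}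
    {u : ℝ≥0 → Ω → E} {C : Set E} (hu : Adapted 𝓕 u) (hu_cont : ∀ ω, Continuous fun s => u s ω)
    (hC : IsClosed C) : IsStoppingTime 𝓕 (hittingAfter u C 0) := by
  intro t
  obtain ⟨S, hS_count, hS_dense⟩ := TopologicalSpace.exists_countable_dense ℝ≥0
  have : Countable S := hS_count.to_subtype
  -- Clamping at `t` turns an infimum over the compact `Icc 0 t` into one over a dense subset.
  have hdist_cont (ω : Ω) : Continuous fun s => Metric.infEDist (u (min s t) ω) C :=
    Metric.continuous_infEDist.comp ((hu_cont ω).comp (continuous_id.min continuous_const))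
  have hset : {ω | hittingAfter u C 0 ω ≤ t} =
      {ω | ⨅ s : S, Metric.infEDist (u (min s t) ω) C = 0} := by
    ext ω
    simp only [mem_ofPred_eq, hittingAfter_le_coe_iff_of_isClosed (hu_cont ω) hC]
    rw [hS_dense.ciInf' (hdist_cont ω)]
    constructor
    · rintro ⟨s, hs, hsC⟩
      refine le_antisymm (iInf_le_of_le s ?_) zero_le
      rw [min_eq_left hs.2, Metric.infEDist_zero_of_mem hsC]
    · intro h
      obtain ⟨s, hs, hs_min⟩ := isCompact_Icc.exists_isMinOn (nonempty_Icc.2 (zero_le : 0 ≤ t))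
        (hdist_cont ω).continuousOn
      refine ⟨s, hs, (Metric.mem_iff_infEDist_zero_of_closed hC).2 (le_antisymm ?_ zero_le)⟩
      rw [← h]
      refine le_iInf fun q => ?_
      simpa [min_eq_left hs.2] using hs_min (a := min q t) ⟨zero_le, min_le_right _ _⟩
  rw [hset]
  refine measurableSet_eq_fun (.iInf fun s => ?_) measurable_const
  exact measurable_infEDist.comp ((hu _).mono (𝓕.mono (min_le_right _ _)) le_rfl)

variable {Ω : Type*} {u : ℝ≥0 → Ω → ℝ} {b : ℝ} {t : ℝ≥0} {ω : Ω}

lemma min_le_of_le_hittingAfter_Iic (hu : Continuous fun s => u s ω)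
    (ht : t ≤ hittingAfter u (Iic b) 0 ω) : min (u 0 ω) b ≤ u t ω := by
  by_contra! hlt
  obtain ⟨s, hs, hs_eq⟩ := intermediate_value_Icc' (zero_le : 0 ≤ t) hu.continuousOn
    ⟨hlt.le, min_le_left _ b⟩
  have hsb : u s ω ∈ Iic b := hs_eq.trans_le (min_le_right _ _)
  have hts : t ≤ s := WithTop.coe_le_coe.1 (ht.trans (hittingAfter_le_of_mem zero_le hsb))
  rw [hts.antisymm hs.2] at hlt
  exact hlt.ne hs_eq

lemma eq_min_of_hittingAfter_Iic_eq (hu : Continuous fun s => u s ω)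
    (ht : hittingAfter u (Iic b) 0 ω = t) : u t ω = min (u 0 ω) b := by
  obtain ⟨s, hs, hsb⟩ := (hittingAfter_le_coe_iff_of_isClosed hu isClosed_Iic).1 ht.le
  have le_of_hit {q : ℝ≥0} (hq : u q ω ≤ b) : t ≤ q :=
    WithTop.coe_le_coe.1 (ht ▸ hittingAfter_le_of_mem zero_le hq)
  have htb : u t ω ≤ b := by rwa [(le_of_hit hsb).antisymm hs.2]
  refine le_antisymm (le_min ?_ htb) (min_le_of_le_hittingAfter_Iic hu ht.ge)
  rcases le_or_gt (u 0 ω) b with h0 | h0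
  · rw [(le_of_hit h0).antisymm zero_le]
  · exact htb.trans h0.le

end HittingTime

section BrownianMotion

variable {Ω : Type} {mΩ : MeasurableSpace Ω} {F : Filtration ℝ mΩ} {τ : Ω → ℝ≥0∞}

/-- The restriction to nonnegative times of a filtration indexed by `ℝ`. -/
def nonnegFiltration (F : Filtration ℝ mΩ) : Filtration ℝ≥0 mΩ where
  seq t := F t
  mono' _ _ h := F.mono (NNReal.coe_le_coe.2 h)
  le' t := F.le t

lemma isStoppingTimeE_iff : IsStoppingTimeE F τ ↔ IsStoppingTime (nonnegFiltration F) τ := by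
  refine ⟨fun h t => ?_, fun h t ht => ?_⟩
  · have ht := h t t.coe_nonneg
    rwa [ENNReal.ofReal_coe_nnreal] at ht
  · lift t to ℝ≥0 using ht
    rw [ENNReal.ofReal_coe_nnreal]
    exact h t

/-- The exponential (Wald) martingale `exp (θ W_t - θ² t / 2)` of a Brownian motion `W`. -/
def expMartingale (W : ℝ → Ω → ℝ) (θ : ℝ) (t : ℝ≥0) (ω : Ω) : ℝ :=
  exp (θ * W t ω - θ ^ 2 * t / 2)

lemma expMartingale_eq_mul (W : ℝ → Ω → ℝ) (θ : ℝ) (s t : ℝ≥0) (ω : Ω) :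
    expMartingale W θ t ω = expMartingale W θ s ω * exp (-(θ ^ 2 * (t - s) / 2)) *
      exp (θ * (W t ω - W s ω)) := by
  simp only [expMartingale, ← exp_add]
  ring_nf

namespace IsStdBM

variable {P : Measure Ω} {W : ℝ → Ω → ℝ} (hW : IsStdBM P F W)
include hW

lemma continuous_expMartingale (θ : ℝ) (ω : Ω) :
    Continuous fun t => expMartingale W θ t ω := by
  have := hW.cont ω
  unfold expMartingale
  fun_prop

lemma expMartingale_zero (θ : ℝ) : expMartingale W θ 0 = 1 := by
  ext ω
  simp [expMartingale, hW.init]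

lemma integrable_exp_increment [IsProbabilityMeasure P] (θ : ℝ) {s t : ℝ} (hs : 0 ≤ s)
    (hst : s ≤ t) : Integrable (fun ω => exp (θ * (W t ω - W s ω))) P := by
  refine mgf_pos_iff.1 ?_
  rw [mgf_gaussianReal (hW.incr_law s t hs hst)]
  exact exp_pos _

lemma integral_exp_increment (θ : ℝ) {s t : ℝ} (hs : 0 ≤ s) (hst : s ≤ t) :
    ∫ ω, exp (θ * (W t ω - W s ω)) ∂P = exp (θ ^ 2 * (t - s) / 2) := by
  have hmgf := mgf_gaussianReal (hW.incr_law s t hs hst) θ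
  rw [coe_toNNReal _ (sub_nonneg.2 hst), zero_mul, zero_add, mul_comm] at hmgf
  exact hmgf

lemma condExp_exp_increment [IsProbabilityMeasure P] (θ : ℝ) {s t : ℝ} (hs : 0 ≤ s)
    (hst : s ≤ t) :
    P[fun ω => exp (θ * (W t ω - W s ω))|F s] =ᵐ[P] fun _ => exp (θ ^ 2 * (t - s) / 2) := by
  have hmeas : Measurable fun ω => W t ω - W s ω :=
    ((hW.adapted t).mono (F.le t) le_rfl).sub ((hW.adapted s).mono (F.le s) le_rfl)
  have hexp : StronglyMeasurable[MeasurableSpace.comap (fun ω => W t ω - W s ω)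
      Real.measurableSpace] fun ω => exp (θ * (W t ω - W s ω)) :=
    (measurable_exp.comp (measurable_id.const_mul θ)).comp (comap_measurable _)
      |>.stronglyMeasurable
  rw [← hW.integral_exp_increment θ hs hst]
  exact condExp_indep_eq hmeas.comap_le (F.le s) hexp (hW.incr_indep s t hs hst)

theorem martingale_expMartingale [IsProbabilityMeasure P] (θ : ℝ) :
    Martingale (expMartingale W θ) (nonnegFiltration F) P := by
  have hmeas (t : ℝ≥0) : StronglyMeasurable[F t] (expMartingale W θ t) :=
    (measurable_exp.comp (((hW.adapted t).const_mul θ).sub_const _)).stronglyMeasurable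
  have hint (t : ℝ≥0) : Integrable (expMartingale W θ t) P := by
    refine (((hW.integrable_exp_increment θ le_rfl t.coe_nonneg).const_mul
      (exp (-(θ ^ 2 * t / 2)))).congr (ae_of_all _ fun ω => ?_))
    simp [expMartingale_eq_mul W θ 0 t, hW.expMartingale_zero]
  refine ⟨hmeas, fun s t hst => ?_⟩
  have hfactor : expMartingale W θ t = (fun ω => expMartingale W θ s ω *
      exp (-(θ ^ 2 * (t - s) / 2))) * fun ω => exp (θ * (W t ω - W s ω)) :=
    funext fun ω => expMartingale_eq_mul W θ s t ω
  have hpull := condExp_mul_of_stronglyMeasurable_left ((hmeas s).mul_const _)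
    (hfactor ▸ hint t) (hW.integrable_exp_increment θ s.coe_nonneg (NNReal.coe_le_coe.2 hst))
  calc P[expMartingale W θ t|F s]
    _ =ᵐ[P] _ := hfactor ▸ hpull
    _ =ᵐ[P] expMartingale W θ s := by
      filter_upwards [hW.condExp_exp_increment θ s.coe_nonneg (NNReal.coe_le_coe.2 hst)] with ω hω
      rw [Pi.mul_apply, hω, mul_assoc, ← exp_add, neg_add_cancel, exp_zero, mul_one]

end IsStdBM

end BrownianMotion

section GeometricBrownianMotion

lemma stoppedValue_eq_toNNReal {Ω E : Type*} (u : ℝ≥0 → Ω → E) {τ : Ω → ℝ≥0∞} {ω : Ω}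
    (hω : τ ω ≠ ⊤) : stoppedValue u τ ω = u (τ ω).toNNReal ω := by
  obtain ⟨t, ht⟩ := WithTop.ne_top_iff_exists.1 hω
  simp only [stoppedValue, ← ht]
  rfl

/-- The exponential growth rate of the `p`-th moment of a geometric Brownian motion:
`E[(X^x_t)^p] = x^p exp (growthRate r σ p * t)`. -/
def growthRate (r σ p : ℝ) : ℝ := p * r + p * (p - 1) * σ ^ 2 / 2

lemma growthRate_one (r σ : ℝ) : growthRate r σ 1 = r := by
  simp [growthRate]

lemma growthRate_neg_two_mul_div_sq {σ : ℝ} (r : ℝ) (hσ : σ ≠ 0) :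
    growthRate r σ (-(2 * r / σ ^ 2)) = r := by
  rw [growthRate]
  field_simp
  ring

lemma growthRate_pos_of_neg {r σ p : ℝ} (hσ : σ ≠ 0) (hrσ : 2 * r ≤ σ ^ 2) (hp : p < 0) :
    0 < growthRate r σ p := by
  have h : 0 < -p * (σ ^ 2 - 2 * r + -p * σ ^ 2) :=
    mul_pos (neg_pos.2 hp) (add_pos_of_nonneg_of_pos (sub_nonneg.2 hrσ)
      (mul_pos (neg_pos.2 hp) (by positivity)))
  rw [growthRate]
  linarith

variable {Ω : Type} {r σ x : ℝ} {W : ℝ → Ω → ℝ}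

lemma GBM_pos (hx : 0 < x) (t : ℝ) (ω : Ω) : 0 < GBM r σ x W t ω :=
  mul_pos hx (exp_pos _)

/-- The `p`-th power of a geometric Brownian motion, discounted at the rate that makes it a
martingale. -/
def discountedPower (r σ x : ℝ) (W : ℝ → Ω → ℝ) (p : ℝ) (t : ℝ≥0) (ω : Ω) : ℝ :=
  exp (-growthRate r σ p * t) * GBM r σ x W t ω ^ p

lemma discountedPower_nonneg (hx : 0 < x) (p : ℝ) : 0 ≤ discountedPower r σ x W p :=
  fun t ω => mul_nonneg (exp_pos _).le (rpow_nonneg (GBM_pos hx t ω).le p)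

lemma discountedPower_eq_smul (hx : 0 < x) (p : ℝ) :
    discountedPower r σ x W p = x ^ p • expMartingale W (p * σ) := by
  ext t ω
  rw [discountedPower, GBM, mul_rpow hx.le (exp_pos _).le, mul_left_comm, ← exp_mul, ← exp_add,
    Pi.smul_apply, Pi.smul_apply, expMartingale, smul_eq_mul, growthRate]
  ring_nf

namespace IsStdBM

variable {mΩ : MeasurableSpace Ω} {F : Filtration ℝ mΩ} {P : Measure Ω} (hW : IsStdBM P F W)
include hW

lemma GBM_zero (ω : Ω) : GBM r σ x W 0 ω = x := by
  simp [GBM, hW.init]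

lemma continuous_GBM (ω : Ω) : Continuous fun t => GBM r σ x W t ω := by
  have := hW.cont ω
  unfold GBM
  fun_prop

lemma adapted_GBM : Adapted (nonnegFiltration F) fun (t : ℝ≥0) ω => GBM r σ x W t ω :=
  fun t => (measurable_exp.comp (((hW.adapted t).const_mul σ).const_add _)).const_mul x

lemma discountedPower_zero (p : ℝ) (ω : Ω) : discountedPower r σ x W p 0 ω = x ^ p := by
  simp [discountedPower, hW.GBM_zero]

lemma continuous_discountedPower (hx : 0 < x) (p : ℝ) (ω : Ω) :
    Continuous fun t => discountedPower r σ x W p t ω := by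
  rw [discountedPower_eq_smul hx]
  exact (hW.continuous_expMartingale (p * σ) ω).const_smul (x ^ p)

variable [IsProbabilityMeasure P]

lemma martingale_discountedPower (hx : 0 < x) (p : ℝ) :
    Martingale (discountedPower r σ x W p) (nonnegFiltration F) P := by
  rw [discountedPower_eq_smul hx]
  exact (hW.martingale_expMartingale (p * σ)).smul (x ^ p)

variable {τ : Ω → ℝ≥0∞}

lemma integrable_and_integral_stoppedProcess_discountedPower (hx : 0 < x) (p : ℝ)
    (hτ : IsStoppingTimeE F τ) (t : ℝ≥0) :
    Integrable (stoppedProcess (discountedPower r σ x W p) τ t) P ∧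
      ∫ ω, stoppedProcess (discountedPower r σ x W p) τ t ω ∂P = x ^ p := by
  simpa [hW.discountedPower_zero] using
    integrable_and_integral_stoppedProcess (hW.martingale_discountedPower hx p)
      (fun ω t => (hW.continuous_discountedPower hx p ω).continuousWithinAt)
      (isStoppingTimeE_iff.1 hτ) t

lemma integrableOn_and_setIntegral_exp_mul_GBM_rpow_le (hx : 0 < x) (p : ℝ)
    (hτ : IsStoppingTimeE F τ) :
    IntegrableOn (fun ω => exp (-growthRate r σ p * (τ ω).toReal) *
        GBM r σ x W (τ ω).toReal ω ^ p) {ω | τ ω ≠ ⊤} P ∧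
      ∫ ω in {ω | τ ω ≠ ⊤}, exp (-growthRate r σ p * (τ ω).toReal) *
        GBM r σ x W (τ ω).toReal ω ^ p ∂P ≤ x ^ p := by
  have hτ' := isStoppingTimeE_iff.1 hτ
  have hmeas : MeasurableSet {ω | τ ω ≠ ⊤} := hτ'.measurableSet_eq_top.compl
  have hval : EqOn (stoppedValue (discountedPower r σ x W p) τ) (fun ω =>
      exp (-growthRate r σ p * (τ ω).toReal) * GBM r σ x W (τ ω).toReal ω ^ p)
      {ω | τ ω ≠ ⊤} := fun ω hω =>
    stoppedValue_eq_toNNReal _ hω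
  rw [← integrableOn_congr_fun hval hmeas, ← setIntegral_congr_fun hmeas hval]
  have hmart : Martingale (discountedPower r σ x W p) (nonnegFiltration F) P :=
    hW.martingale_discountedPower hx p
  have hle := integrableOn_stoppedValue_and_setIntegral_le hmart
    (fun ω t => (hW.continuous_discountedPower hx p ω).continuousWithinAt)
    (discountedPower_nonneg hx p) hτ'
  simp only [hW.discountedPower_zero, integral_const, probReal_univ, one_smul] at hle
  exact hle

end IsStdBM

end GeometricBrownianMotion

section FirstPassage

variable {Ω : Type} {r σ x b : ℝ} {W : ℝ → Ω → ℝ}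

/-- The first passage time of a geometric Brownian motion at or below the level `b`, with value
`⊤` on paths that stay above `b`. In contrast, `hitTime` is real-valued, with junk value `0` on
such paths. -/
def firstPassage (r σ x b : ℝ) (W : ℝ → Ω → ℝ) : Ω → ℝ≥0∞ :=
  hittingAfter (fun (t : ℝ≥0) ω => GBM r σ x W t ω) (Iic b) 0

lemma toReal_firstPassage (ω : Ω) :
    (firstPassage r σ x b W ω).toReal = hitTime r σ x b W ω := by
  have himage : {t : ℝ | 0 ≤ t ∧ GBM r σ x W t ω ≤ b} =
      (↑) '' {t : ℝ≥0 | 0 ≤ t ∧ GBM r σ x W t ω ∈ Iic b} := by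
    ext t
    refine ⟨fun ⟨h0, ht⟩ => ⟨⟨t, h0⟩, ⟨zero_le, ht⟩, rfl⟩, ?_⟩
    rintro ⟨s, ⟨-, hs⟩, rfl⟩
    exact ⟨s.coe_nonneg, hs⟩
  rw [hitTime, himage, ← NNReal.coe_sInf, firstPassage, hittingAfter]
  split_ifs with h
  · rfl
  · have hempty : {t : ℝ≥0 | 0 ≤ t ∧ GBM r σ x W t ω ∈ Iic b} = ∅ :=
      not_nonempty_iff_eq_empty.1 h
    rw [hempty, NNReal.sInf_empty]
    rfl

namespace IsStdBM

variable {mΩ : MeasurableSpace Ω} {F : Filtration ℝ mΩ} {P : Measure Ω} (hW : IsStdBM P F W)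
include hW

lemma isStoppingTimeE_firstPassage : IsStoppingTimeE F (firstPassage r σ x b W) :=
  isStoppingTimeE_iff.2 <| isStoppingTime_hittingAfter_of_isClosed hW.adapted_GBM
    (fun ω => (hW.continuous_GBM ω).comp NNReal.continuous_coe) isClosed_Iic

lemma min_le_GBM_of_le_firstPassage {t : ℝ≥0} {ω : Ω} (ht : t ≤ firstPassage r σ x b W ω) :
    min x b ≤ GBM r σ x W t ω := by
  simpa [hW.GBM_zero] using min_le_of_le_hittingAfter_Iic
    (u := fun (t : ℝ≥0) ω => GBM r σ x W t ω)
    ((hW.continuous_GBM ω).comp NNReal.continuous_coe) ht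

lemma GBM_firstPassage {ω : Ω} (hω : firstPassage r σ x b W ω ≠ ⊤) :
    GBM r σ x W (firstPassage r σ x b W ω).toReal ω = min x b := by
  obtain ⟨t, ht⟩ := WithTop.ne_top_iff_exists.1 hω
  rw [← ht]
  simpa [hW.GBM_zero] using eq_min_of_hittingAfter_Iic_eq
    (u := fun (t : ℝ≥0) ω => GBM r σ x W t ω)
    ((hW.continuous_GBM ω).comp NNReal.continuous_coe) ht.symm

lemma discountedPower_le_of_le_firstPassage {p : ℝ} (hp : p ≤ 0) (hx : 0 < x) (hb : 0 < b)
    {t : ℝ≥0} {ω : Ω} (ht : t ≤ firstPassage r σ x b W ω) :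
    discountedPower r σ x W p t ω ≤ exp (-growthRate r σ p * t) * min x b ^ p :=
  mul_le_mul_of_nonneg_left (rpow_le_rpow_of_nonpos (lt_min hx hb)
    (hW.min_le_GBM_of_le_firstPassage ht) hp) (exp_pos _).le

lemma tendsto_stoppedProcess_firstPassage {p : ℝ} (hp : p ≤ 0) (hp_rate : 0 < growthRate r σ p)
    (hx : 0 < x) (hb : 0 < b) (ω : Ω) :
    Tendsto (fun n : ℕ => stoppedProcess (discountedPower r σ x W p) (firstPassage r σ x b W) n ω)
      atTop (𝓝 ({ω | firstPassage r σ x b W ω ≠ ⊤}.indicator (fun ω =>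
        exp (-growthRate r σ p * (firstPassage r σ x b W ω).toReal) * min x b ^ p) ω)) := by
  by_cases hω : firstPassage r σ x b W ω = ⊤
  · rw [indicator_of_notMem (s := {ω | firstPassage r σ x b W ω ≠ ⊤}) fun h => h hω]
    have hpath (n : ℕ) : stoppedProcess (discountedPower r σ x W p) (firstPassage r σ x b W) n ω =
        discountedPower r σ x W p n ω := by
      simp only [stoppedProcess, hω]
      rfl
    have hexp : Tendsto (fun n : ℕ => exp (-growthRate r σ p * n) * min x b ^ p) atTop (𝓝 0) := by
      simpa using (tendsto_exp_atBot.comp (tendsto_natCast_atTop_atTop.const_mul_atTop_of_neg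
        (neg_neg_of_pos hp_rate))).mul_const (min x b ^ p)
    simp only [hpath]
    exact squeeze_zero (fun n => discountedPower_nonneg hx p n ω)
      (fun n => hW.discountedPower_le_of_le_firstPassage hp hx hb (hω ▸ le_top)) hexp
  · rw [indicator_of_mem (s := {ω | firstPassage r σ x b W ω ≠ ⊤}) hω, ← hW.GBM_firstPassage hω]
    have hlim := tendsto_stoppedProcess (f := discountedPower r σ x W p) hω
    rwa [stoppedValue_eq_toNNReal _ hω] at hlim

lemma stoppedProcess_firstPassage_le {p : ℝ} (hp : p ≤ 0) (hp_rate : 0 ≤ growthRate r σ p)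
    (hx : 0 < x) (hb : 0 < b) (t : ℝ≥0) (ω : Ω) :
    stoppedProcess (discountedPower r σ x W p) (firstPassage r σ x b W) t ω ≤ min x b ^ p := by
  obtain ⟨s, hs⟩ := WithTop.ne_top_iff_exists.1
    (ne_top_of_le_ne_top WithTop.coe_ne_top (min_le_left (t : WithTop ℝ≥0)
      (firstPassage r σ x b W ω)))
  simp only [stoppedProcess, ← hs]
  calc discountedPower r σ x W p s ω
    _ ≤ exp (-growthRate r σ p * s) * min x b ^ p :=
      hW.discountedPower_le_of_le_firstPassage hp hx hb (hs.trans_le (min_le_right _ _))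
    _ ≤ 1 * min x b ^ p := by
      gcongr
      exact exp_le_one_iff.2 (mul_nonpos_of_nonpos_of_nonneg (neg_nonpos.2 hp_rate) s.coe_nonneg)
    _ = min x b ^ p := one_mul _

variable [IsProbabilityMeasure P]

-- The martingale `discountedPower` stopped at `τ ∧ n` is bounded, and its limit vanishes on
-- `{τ = ⊤}`, so its expectation passes to the limit without assuming `τ` finite.
theorem setIntegral_exp_firstPassage {p : ℝ} (hp : p ≤ 0) (hp_rate : 0 < growthRate r σ p)
    (hx : 0 < x) (hb : 0 < b) :
    ∫ ω in {ω | firstPassage r σ x b W ω ≠ ⊤},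
      exp (-growthRate r σ p * (firstPassage r σ x b W ω).toReal) ∂P = (x / min x b) ^ p := by
  have hτ : IsStoppingTimeE F (firstPassage r σ x b W) := hW.isStoppingTimeE_firstPassage
  have hmeas : MeasurableSet {ω | firstPassage r σ x b W ω ≠ ⊤} :=
    (isStoppingTimeE_iff.1 hτ).measurableSet_eq_top.compl
  have hmean := hW.integrable_and_integral_stoppedProcess_discountedPower (r := r) (σ := σ) hx p hτ
  have hlim := tendsto_integral_of_dominated_convergence (μ := P) (fun _ => min x b ^ p)
    (fun n : ℕ => (hmean n).1.1) (integrable_const _)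
    (fun n => ae_of_all _ fun ω => (Real.norm_of_nonneg (discountedPower_nonneg hx p _ ω)).trans_le
      (hW.stoppedProcess_firstPassage_le hp hp_rate.le hx hb n ω))
    (ae_of_all _ (hW.tendsto_stoppedProcess_firstPassage hp hp_rate hx hb))
  simp only [(hmean _).2, integral_indicator hmeas, integral_mul_const] at hlim
  rw [div_rpow hx.le (lt_min hx hb).le, eq_div_iff (rpow_pos_of_pos (lt_min hx hb) p).ne']
  exact tendsto_nhds_unique hlim tendsto_const_nhds

theorem ae_firstPassage_ne_top (hσ : σ ≠ 0) (hrσ : 2 * r ≤ σ ^ 2) (hx : 0 < x) (hb : 0 < b) :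
    ∀ᵐ ω ∂P, firstPassage r σ x b W ω ≠ ⊤ := by
  have hlower {p : ℝ} (hp : p < 0) :
      (x / min x b) ^ p ≤ P.real {ω | firstPassage r σ x b W ω ≠ ⊤} := by
    have hrate : 0 < growthRate r σ p := growthRate_pos_of_neg hσ hrσ hp
    rw [← hW.setIntegral_exp_firstPassage hp.le hrate hx hb, ← one_mul (P.real _)]
    refine (Real.le_norm_self _).trans
      (norm_setIntegral_le_of_norm_le_const (measure_lt_top _ _) ?_)
    intro ω _
    rw [Real.norm_of_nonneg (exp_pos _).le]
    exact exp_le_one_iff.2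
      (mul_nonpos_of_nonpos_of_nonneg (neg_nonpos.2 hrate.le) ENNReal.toReal_nonneg)
  have hlim : Tendsto (fun p : ℝ => (x / min x b) ^ p) (𝓝[<] 0) (𝓝 1) := by
    have hcont := continuous_const_rpow (div_pos hx (lt_min hx hb)).ne'
    simpa using (hcont.tendsto 0).mono_left nhdsWithin_le_nhds
  have hone : 1 ≤ P.real {ω | firstPassage r σ x b W ω ≠ ⊤} :=
    le_of_tendsto hlim (eventually_mem_nhdsWithin.mono fun p hp => hlower hp)
  have hτ : IsStoppingTimeE F (firstPassage r σ x b W) := hW.isStoppingTimeE_firstPassage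
  have hmeas : MeasurableSet {ω | firstPassage r σ x b W ω ≠ ⊤} :=
    (isStoppingTimeE_iff.1 hτ).measurableSet_eq_top.compl
  have hone' : P {ω | firstPassage r σ x b W ω ≠ ⊤} = 1 := by
    rw [← ofReal_measureReal, measureReal_le_one.antisymm hone, ENNReal.ofReal_one]
  exact (mem_ae_iff_prob_eq_one hmeas).2 hone'

end IsStdBM

end FirstPassage

section ExpectedPayoff

variable {Ω : Type} {r σ x b : ℝ} {W : ℝ → Ω → ℝ} {mΩ : MeasurableSpace Ω}
  {F : Filtration ℝ mΩ} {P : Measure Ω}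

/-- The expected discounted payoff `E[e^{-rτ} g(X^x_τ)]` of stopping a geometric Brownian motion
at `τ`, where nothing is paid on `{τ = ⊤}`. -/
def expectedPayoff (P : Measure Ω) (W : ℝ → Ω → ℝ) (r σ x : ℝ) (g : ℝ → ℝ) (τ : Ω → ℝ≥0∞) : ℝ :=
  ∫ ω in {ω | τ ω ≠ ⊤}, exp (-r * (τ ω).toReal) * g (GBM r σ x W (τ ω).toReal ω) ∂P

namespace IsStdBM

variable [IsProbabilityMeasure P] (hW : IsStdBM P F W) {g : ℝ → ℝ}
include hW

-- `y` and `y ^ (-2r/σ²)` are the two powers whose `growthRate` equals the discount rate `r`.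
theorem expectedPayoff_le_of_le {τ : Ω → ℝ≥0∞} (hτ : IsStoppingTimeE F τ) (hσ : σ ≠ 0)
    (hx : 0 < x) {A B : ℝ} (hA : 0 ≤ A) (hB : 0 ≤ B) (hg_nonneg : ∀ y, 0 < y → 0 ≤ g y)
    (hg : ∀ y, 0 < y → g y ≤ A * y + B * y ^ (-(2 * r / σ ^ 2))) :
    expectedPayoff P W r σ x g τ ≤ A * x + B * x ^ (-(2 * r / σ ^ 2)) := by
  have hlin := hW.integrableOn_and_setIntegral_exp_mul_GBM_rpow_le (r := r) (σ := σ) hx 1 hτ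
  have hpow := hW.integrableOn_and_setIntegral_exp_mul_GBM_rpow_le (r := r) (σ := σ) hx
    (-(2 * r / σ ^ 2)) hτ
  simp only [growthRate_one, rpow_one] at hlin
  rw [growthRate_neg_two_mul_div_sq r hσ] at hpow
  calc expectedPayoff P W r σ x g τ
    _ ≤ ∫ ω in {ω | τ ω ≠ ⊤},
          (A * (exp (-r * (τ ω).toReal) * GBM r σ x W (τ ω).toReal ω) +
            B * (exp (-r * (τ ω).toReal) *
              GBM r σ x W (τ ω).toReal ω ^ (-(2 * r / σ ^ 2)))) ∂P := by
      refine integral_mono_of_nonneg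
        (ae_of_all _ fun ω => mul_nonneg (exp_pos _).le (hg_nonneg _ (GBM_pos hx _ ω)))
        ((hlin.1.const_mul A).add (hpow.1.const_mul B)) (ae_of_all _ fun ω => ?_)
      have hω := mul_le_mul_of_nonneg_left (hg _ (GBM_pos (r := r) (σ := σ) (W := W) hx
        (τ ω).toReal ω)) (exp_pos (-r * (τ ω).toReal)).le
      linarith
    _ = _ := integral_add (hlin.1.const_mul A) (hpow.1.const_mul B)
    _ ≤ A * x + B * x ^ (-(2 * r / σ ^ 2)) := by
      rw [integral_const_mul, integral_const_mul]
      exact add_le_add (mul_le_mul_of_nonneg_left hlin.2 hA) (mul_le_mul_of_nonneg_left hpow.2 hB)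

theorem expectedPayoff_firstPassage (hr : 0 < r) (hσ : σ ≠ 0) (hx : 0 < x) (hb : 0 < b) :
    expectedPayoff P W r σ x g (firstPassage r σ x b W) =
      g (min x b) * (x / min x b) ^ (-(2 * r / σ ^ 2)) := by
  have hrate : growthRate r σ (-(2 * r / σ ^ 2)) = r := growthRate_neg_two_mul_div_sq r hσ
  have hlaplace := hW.setIntegral_exp_firstPassage (p := -(2 * r / σ ^ 2))
    (neg_nonpos.2 (by positivity)) (hrate.symm ▸ hr) hx hb
  have hmeas : MeasurableSet {ω | firstPassage r σ x b W ω ≠ ⊤} :=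
    (isStoppingTimeE_iff.1 hW.isStoppingTimeE_firstPassage).measurableSet_eq_top.compl
  rw [hrate] at hlaplace
  rw [← hlaplace, ← integral_const_mul, expectedPayoff]
  refine setIntegral_congr_fun hmeas fun ω hω => ?_
  simp only [hW.GBM_firstPassage hω, mul_comm]

theorem expectedPayoff_firstPassage_eq_integral (hσ : σ ≠ 0) (hrσ : 2 * r ≤ σ ^ 2) (hx : 0 < x)
    (hb : 0 < b) :
    expectedPayoff P W r σ x g (firstPassage r σ x b W) =
      ∫ ω, exp (-r * hitTime r σ x b W ω) * g (GBM r σ x W (hitTime r σ x b W ω) ω) ∂P := by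
  rw [expectedPayoff, Measure.restrict_eq_self_of_ae_mem
    (s := {ω | firstPassage r σ x b W ω ≠ ⊤}) (hW.ae_firstPassage_ne_top hσ hrσ hx hb)]
  simp only [toReal_firstPassage]

end IsStdBM

end ExpectedPayoff

section PerpetualPut

variable {r σ L K γ c x y : ℝ}

lemma div_rpow_sub_one (hL : 0 < L) (hy : 0 < y) (γ : ℝ) :
    (L / y) ^ (γ - 1) = L ^ (γ - 1) * y * y ^ (-γ) := by
  rw [div_rpow hL.le hy.le, div_eq_mul_inv, ← rpow_neg hy.le, neg_sub, sub_eq_add_neg 1 γ,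
    rpow_add hy, rpow_one, mul_assoc]

lemma gainP_nonneg (hL : 0 < L) (hy : 0 < y) : 0 ≤ gainP r σ L K y :=
  mul_nonneg (le_max_right _ _) (le_min (rpow_nonneg (div_pos hL hy).le _) zero_le_one)

lemma gainP_le_of_mul_le {B : ℝ} (hL : 0 < L) (hy : 0 < y) (hB_nonneg : 0 ≤ B)
    (hB : (K - y) * y ≤ B) :
    gainP r σ L K y ≤ L ^ (2 * r / σ ^ 2 - 1) * B * y ^ (-(2 * r / σ ^ 2)) := by
  have hmax : max (K - y) 0 * y ≤ B := by
    rw [max_mul_of_nonneg _ _ hy.le, zero_mul]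
    exact max_le hB hB_nonneg
  calc gainP r σ L K y
    _ ≤ max (K - y) 0 * (L / y) ^ (2 * r / σ ^ 2 - 1) :=
      mul_le_mul_of_nonneg_left (min_le_left _ _) (le_max_right _ _)
    _ = L ^ (2 * r / σ ^ 2 - 1) * (max (K - y) 0 * y) * y ^ (-(2 * r / σ ^ 2)) := by
      rw [div_rpow_sub_one hL hy]
      ring
    _ ≤ _ := by gcongr

lemma gainP_eq_of_le (hrσ : 2 * r ≤ σ ^ 2) (hL : 0 < L) (hy : 0 < y) (hyL : y ≤ L)
    (hyK : y ≤ K) :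
    gainP r σ L K y = L ^ (2 * r / σ ^ 2 - 1) * ((K - y) * y) * y ^ (-(2 * r / σ ^ 2)) := by
  have hα : 2 * r / σ ^ 2 - 1 ≤ 0 := sub_nonpos.2 (div_le_one_of_le₀ hrσ (sq_nonneg σ))
  have hZ : Zp r σ L y = (L / y) ^ (2 * r / σ ^ 2 - 1) :=
    min_eq_left (rpow_le_one_of_one_le_of_nonpos ((one_le_div hy).2 hyL) hα)
  rw [gainP, hZ, max_eq_left (sub_nonneg.2 hyK), div_rpow_sub_one hL hy]
  ring

/-- The value at `y` of the combination of the powers `y` and `y ^ (-γ)` that is tangent at `c` to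
`L ^ (γ - 1) * (K - y) * y ^ (1 - γ)`, the formula of the gain below `min L K` with
`γ = 2r/σ²`. -/
def harmonicMajorant (γ L K c y : ℝ) : ℝ :=
  L ^ (γ - 1) * ((K - 2 * c) / (1 + γ) * c ^ (-γ)) * y +
    L ^ (γ - 1) * (c * (γ * K + (1 - γ) * c) / (1 + γ)) * y ^ (-γ)

lemma sub_mul_le_rpow_add_const (hγ : 0 ≤ γ) (hc : 0 < c) (hcK : 2 * c ≤ K) (hy : 0 < y) :
    (K - y) * y ≤ (K - 2 * c) / (1 + γ) * c ^ (-γ) * y ^ (1 + γ) +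
      c * (γ * K + (1 - γ) * c) / (1 + γ) := by
  have hbernoulli : 1 + (1 + γ) * (y / c - 1) ≤ (y / c) ^ (1 + γ) := by
    have h := one_add_mul_self_le_rpow_one_add (s := y / c - 1) (p := 1 + γ)
      (by linarith [div_pos hy hc]) (by linarith)
    rwa [add_sub_cancel] at h
  have hpow : c ^ (-γ) * y ^ (1 + γ) = c * (y / c) ^ (1 + γ) := by
    have hcγ := (rpow_pos_of_pos hc γ).ne'
    rw [div_rpow hy.le hc.le, rpow_neg hc.le, rpow_add hc, rpow_one]
    field_simp
  have hcoeff : 0 ≤ (K - 2 * c) / (1 + γ) * c :=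
    mul_nonneg (div_nonneg (sub_nonneg.2 hcK) (by linarith)) hc.le
  calc (K - y) * y
    _ ≤ (K - y) * y + (y - c) ^ 2 := le_add_of_nonneg_right (sq_nonneg _)
    _ = (K - 2 * c) / (1 + γ) * c * (1 + (1 + γ) * (y / c - 1)) +
          c * (γ * K + (1 - γ) * c) / (1 + γ) := by
      field_simp
      ring
    _ ≤ (K - 2 * c) / (1 + γ) * c * (y / c) ^ (1 + γ) +
          c * (γ * K + (1 - γ) * c) / (1 + γ) :=
      add_le_add_left (mul_le_mul_of_nonneg_left hbernoulli hcoeff) _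
    _ = _ := by rw [mul_assoc _ (c ^ (-γ)), hpow, mul_assoc _ c]

lemma gainP_le_harmonicMajorant (hr : 0 ≤ r) (hrσ : 2 * r ≤ σ ^ 2) (hL : 0 < L) (hc : 0 < c)
    (hcK : 2 * c ≤ K) (hy : 0 < y) :
    gainP r σ L K y ≤ harmonicMajorant (2 * r / σ ^ 2) L K c y := by
  have hγ : 0 ≤ 2 * r / σ ^ 2 := by positivity
  have hγ' : 2 * r / σ ^ 2 ≤ 1 := div_le_one_of_le₀ hrσ (sq_nonneg σ)
  set γ := 2 * r / σ ^ 2 with hγ_def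
  have hK : 0 ≤ K := by linarith
  have hmul : y ^ (1 + γ) * y ^ (-γ) = y := by
    rw [← rpow_add hy, add_neg_cancel_right, rpow_one]
  have hnonneg : 0 ≤ (K - 2 * c) / (1 + γ) * c ^ (-γ) * y ^ (1 + γ) +
      c * (γ * K + (1 - γ) * c) / (1 + γ) := by
    have := sub_nonneg.2 hcK
    have := sub_nonneg.2 hγ'
    positivity
  refine (gainP_le_of_mul_le hL hy hnonneg (sub_mul_le_rpow_add_const hγ hc hcK hy)).trans_eq ?_
  rw [← hγ_def, harmonicMajorant]
  linear_combination L ^ (γ - 1) * ((K - 2 * c) / (1 + γ) * c ^ (-γ)) * hmul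

lemma harmonicMajorant_min_half (hγ : 0 ≤ γ) :
    harmonicMajorant γ L K (min x (K / 2)) x =
      L ^ (γ - 1) * ((K - min x (K / 2)) * min x (K / 2)) * x ^ (-γ) := by
  rcases min_choice x (K / 2) with h | h <;>
  · rw [h, harmonicMajorant]
    field_simp
    ring

end PerpetualPut

section OptimalStopping

variable {Ω : Type} {mΩ : MeasurableSpace Ω} {P : Measure Ω} [IsProbabilityMeasure P]
  {F : Filtration ℝ mΩ} {W : ℝ → Ω → ℝ} {r σ L K x : ℝ}

namespace IsStdBM

variable (hW : IsStdBM P F W)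
include hW

theorem expectedPayoff_gainP_le_harmonicMajorant {τ : Ω → ℝ≥0∞} (hτ : IsStoppingTimeE F τ)
    (hr : 0 ≤ r) (hσ : σ ≠ 0) (hrσ : 2 * r ≤ σ ^ 2) (hL : 0 < L) {c : ℝ} (hc : 0 < c)
    (hcK : 2 * c ≤ K) (hx : 0 < x) :
    expectedPayoff P W r σ x (gainP r σ L K) τ ≤ harmonicMajorant (2 * r / σ ^ 2) L K c x := by
  have : 0 ≤ K := by linarith
  have : 0 ≤ K - 2 * c := sub_nonneg.2 hcK
  have : 0 ≤ 1 - 2 * r / σ ^ 2 := sub_nonneg.2 (div_le_one_of_le₀ hrσ (sq_nonneg σ))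
  exact hW.expectedPayoff_le_of_le hτ hσ hx (by positivity) (by positivity)
    (fun _ hy => gainP_nonneg hL hy)
    (fun _ hy => gainP_le_harmonicMajorant hr hrσ hL hc hcK hy)

lemma expectedPayoff_gainP_firstPassage (hr : 0 < r) (hσ : σ ≠ 0) (hrσ : 2 * r ≤ σ ^ 2)
    (hL : 0 < L) (hx : 0 < x) {b : ℝ} (hb : 0 < b) (hbL : b ≤ L) (hbK : b ≤ K) :
    expectedPayoff P W r σ x (gainP r σ L K) (firstPassage r σ x b W) =
      L ^ (2 * r / σ ^ 2 - 1) * ((K - min x b) * min x b) * x ^ (-(2 * r / σ ^ 2)) := by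
  have hc : 0 < min x b := lt_min hx hb
  have hcb : min x b ≤ b := min_le_right x b
  rw [hW.expectedPayoff_firstPassage hr hσ hx hb,
    gainP_eq_of_le hrσ hL hc (hcb.trans hbL) (hcb.trans hbK), mul_assoc,
    ← mul_rpow hc.le (div_pos hx hc).le, mul_div_cancel₀ x hc.ne']

theorem valueP_eq_expectedPayoff_firstPassage (hr : 0 < r) (hσ : σ ≠ 0) (hrσ : 2 * r ≤ σ ^ 2)
    (hL : 0 < L) (hK : 0 < K) (hKL : K ≤ 2 * L) (hx : 0 < x) :
    valueP P F W r σ L K x =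
      expectedPayoff P W r σ x (gainP r σ L K) (firstPassage r σ x (K / 2) W) := by
  refine IsGreatest.csSup_eq
    ⟨⟨⟨_, hW.isStoppingTimeE_firstPassage⟩, rfl⟩, forall_mem_range.2 fun τ => ?_⟩
  rw [hW.expectedPayoff_gainP_firstPassage hr hσ hrσ hL hx (half_pos hK) (by linarith)
    (half_le_self hK.le), ← harmonicMajorant_min_half (by positivity)]
  exact hW.expectedPayoff_gainP_le_harmonicMajorant τ.2 hr.le hσ hrσ hL (lt_min hx (half_pos hK))
    (by linarith [min_le_right x (K / 2)]) hx

end IsStdBM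

end OptimalStopping

theorem stmt_4_general {Ω : Type} [mΩ : MeasurableSpace Ω] (P : Measure Ω)
    [IsProbabilityMeasure P] (F : Filtration ℝ mΩ) (W : ℝ → Ω → ℝ) (hW : IsStdBM P F W)
    (r σ L K : ℝ) (hr : 0 < r) (hσ : σ ≠ 0) (hL : 0 < L) (hK : 0 < K)
    (hvol : 2 * r ≤ σ ^ 2) (hK2L : K ≤ 2 * L) :
    (∀ x ∈ Ioc (0 : ℝ) (K / 2), valueP P F W r σ L K x = gainP r σ L K x) ∧
    (∀ x ∈ Ioi (K / 2),
      valueP P F W r σ L K x =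
        L ^ (2 * r / σ ^ 2 - 1) * K ^ 2 / 4 * x ^ (-(2 * r) / σ ^ 2)) ∧
    (∀ x : ℝ, 0 < x →
      valueP P F W r σ L K x =
        ∫ ω, Real.exp (-r * hitTime r σ x (K / 2) W ω) *
          gainP r σ L K (GBM r σ x W (hitTime r σ x (K / 2) W ω) ω) ∂P) := by
  have hb : 0 < K / 2 := half_pos hK
  have hvalue {x : ℝ} (hx : 0 < x) := hW.valueP_eq_expectedPayoff_firstPassage hr hσ hvol hL hK
    hK2L hx
  refine ⟨fun x hx => ?_, fun x hx => ?_, fun x hx => ?_⟩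
  · rw [hvalue hx.1, hW.expectedPayoff_firstPassage hr hσ hx.1 hb, min_eq_left hx.2,
      div_self hx.1.ne', one_rpow, mul_one]
  · have hx0 : 0 < x := hb.trans hx
    rw [hvalue hx0, hW.expectedPayoff_gainP_firstPassage hr hσ hvol hL hx0 hb (by linarith)
      (half_le_self hK.le), min_eq_right (le_of_lt hx), neg_div]
    ring
  · rw [hvalue hx, hW.expectedPayoff_firstPassage_eq_integral hσ hvol hx hb]

/-- Assume `2r < σ²` and `K < 2L`. Then the perpetual value function is
given explicitly by `V(x) = G(x)` for `x ∈ (0, K/2]` and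
`V(x) = (L^α · K² / 4) · x^{−2r/σ²}` for `x ∈ (K/2, ∞)`; moreover the stopping time
`τ_{K/2} = inf{t ≥ 0 : X^x_t ≤ K/2}` is optimal, i.e.
`V(x) = E[e^{−r·τ_{K/2}} G(X^x_{τ_{K/2}})]` for every `x > 0`. -/
theorem stmt_4 {Ω : Type} [mΩ : MeasurableSpace Ω] (P : Measure Ω) [IsProbabilityMeasure P]
    (F : Filtration ℝ mΩ) (W : ℝ → Ω → ℝ) (hW : IsStdBM P F W)
    (r σ L K : ℝ) (hr : 0 < r) (hσ : 0 < σ) (hL : 0 < L) (hLK : L < K)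
    (hvol : 2 * r < σ ^ 2) (hK2L : K < 2 * L) :
    (∀ x ∈ Ioc (0 : ℝ) (K / 2), valueP P F W r σ L K x = gainP r σ L K x) ∧
    (∀ x ∈ Ioi (K / 2),
      valueP P F W r σ L K x =
        L ^ (2 * r / σ ^ 2 - 1) * K ^ 2 / 4 * x ^ (-(2 * r) / σ ^ 2)) ∧
    (∀ x : ℝ, 0 < x →
      valueP P F W r σ L K x =
        ∫ ω, Real.exp (-r * hitTime r σ x (K / 2) W ω) *
          gainP r σ L K (GBM r σ x W (hitTime r σ x (K / 2) W ω) ω) ∂P) := by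
  exact stmt_4_general P F W hW r σ L K hr hσ.ne' hL (hL.trans hLK) hvol.le hK2L.le

end
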